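/- Let K be a field, A a valuation subring of K with maximal ideal m, I the Iwahori subgroup of SL₂, B(K) the upper-triangular subgroup of SL₂(K), and s = (0,1;−1,0). For x ∈ K let u(x) = (1,x;0,1). If x ∈ K but x ∉ A, then u(x)·s ∈ I·B(K). -/

import Mathlib

open scoped Pointwise

/-- `SL₂(K)`. -/
abbrev SL2 (K : Type*) [Field K] := Matrix.SpecialLinearGroup (Fin 2) K

/-- The Iwahori subgroup of `SL₂(K)` relative to a valuation subring `A` of `K`:
matrices with entries in `A` whose lower-left entry is a nonunit of `A`
(i.e. lies in the maximal ideal of `A`). -/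
def Iwahori {K : Type*} [Field K] (A : ValuationSubring K) : Set (SL2 K) :=
  {g | (∀ i j, g.1 i j ∈ A) ∧ ∃ h : g.1 1 0 ∈ A, (⟨g.1 1 0, h⟩ : A) ∈ nonunits A}

/-- The upper triangular (Borel) subgroup `B(K)` of `SL₂(K)`. -/
def BorelSL2 (K : Type*) [Field K] : Set (SL2 K) := {g | g.1 1 0 = 0}

/-- The Weyl element `s = (0,1;−1,0)`. -/
def sMat (K : Type*) [Field K] : SL2 K :=
  ⟨!![0, 1; -1, 0], by simp [Matrix.det_fin_two_of]⟩

/-- The upper unipotent matrix `u(x) = (1,x;0,1)`. -/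
def uUpper {K : Type*} [Field K] (x : K) : SL2 K :=
  ⟨!![1, x; 0, 1], by simp [Matrix.det_fin_two_of]⟩

/-- Rank-one length-drop clause of Lemma 4.2: if `x ∉ A`, then
`u(x)·s ∈ I·B(K)`. -/
theorem stmt_2 {K : Type*} [Field K] (A : ValuationSubring K) (x : K) (hx : x ∉ A) :
    uUpper x * sMat K ∈ Iwahori A * BorelSL2 K := by
  have hx0 : x ≠ 0 := fun h => hx (h ▸ A.zero_mem)
  have hxi : x⁻¹ ∈ A := (A.mem_or_inv_mem x).resolve_left hx
  refine Set.mem_mul.mpr ⟨⟨!![1, 0; x⁻¹, 1], by simp [Matrix.det_fin_two_of]⟩, ?_,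
    ⟨!![-x, 1; 0, -x⁻¹], by simp [Matrix.det_fin_two_of, hx0]⟩, ?_, ?_⟩
  · refine ⟨?_, hxi, ?_⟩
    · intro i j
      fin_cases i <;> fin_cases j <;> simp [hxi, A.zero_mem, A.one_mem]
    · rw [mem_nonunits_iff]
      intro h
      obtain ⟨b, hb⟩ := h.exists_right_inv
      have hb' : x⁻¹ * (b : K) = 1 := congrArg (Subtype.val) hb
      have : (b : K) = x := by
        field_simp at hb'
        exact hb'
      exact hx (this ▸ b.2)
  · show (!![-x, 1; 0, -x⁻¹] : Matrix (Fin 2) (Fin 2) K) 1 0 = 0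
    simp
  · apply Subtype.ext
    show (!![1, 0; x⁻¹, 1] * !![-x, 1; 0, -x⁻¹] : Matrix (Fin 2) (Fin 2) K)
      = !![1, x; 0, 1] * !![0, 1; -1, 0]
    simp [Matrix.mul_fin_two, hx0]
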